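/- Let n ≥ 3 and let G be a simple graph on n vertices v₀,…,v_{n−1} arranged in a cyclic order, whose edge set contains all n boundary edges {vᵢ, v_{i+1 mod n}} together with a set C of chords (edges between non-consecutive vertices). If every chord in C is crossed by at most 5 other chords (two chords cross if and only if their endpoints interleave in the cyclic order), then |C| ≤ 3n − 9. In other words, a face of size |f| all of whose internal chords are crossed at most five times contains at most 3|f| − 9 chords. -/

import Mathlib

/-- `x` lies strictly between `a` and `b` in the cyclic order of `Fin n`
(going forward from `a` to `b` along the cycle). -/
def cycBtw (n : ℕ) (a b x : Fin n) : Prop :=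
  0 < (x.val + n - a.val) % n ∧ (x.val + n - a.val) % n < (b.val + n - a.val) % n

/-- Two edges `e` and `f` cross in the cyclic order determined by the positions `σ`:
they have four distinct endpoints and the endpoints interleave, i.e. exactly one
endpoint of `f` lies strictly between the endpoints of `e`. -/
def crossing (n : ℕ) (σ : Fin n → Fin n) (e f : Sym2 (Fin n)) : Prop :=
  ∃ a b c d : Fin n, e = s(a, b) ∧ f = s(c, d) ∧
    a ≠ b ∧ c ≠ d ∧ a ≠ c ∧ a ≠ d ∧ b ≠ c ∧ b ≠ d ∧
    (cycBtw n (σ a) (σ b) (σ c) ↔ ¬ cycBtw n (σ a) (σ b) (σ d))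

/-- With respect to the cyclic order given by positions `σ`, every edge of `G`
is crossed by at most `k` other edges. -/
def OuterKPlanarOrd (n k : ℕ) (σ : Fin n → Fin n) (G : SimpleGraph (Fin n)) : Prop :=
  ∀ e ∈ G.edgeSet, ({f ∈ G.edgeSet | crossing n σ e f}).ncard ≤ k

/-- `G` is outer `k`-planar: its vertices can be arranged in a cyclic order such
that every edge is crossed by at most `k` other edges. -/
def IsOuterKPlanar (n k : ℕ) (G : SimpleGraph (Fin n)) : Prop :=
  ∃ σ : Fin n ≃ Fin n, OuterKPlanarOrd n k (⇑σ) G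

/-- Two vertices are consecutive in the cyclic order of `Fin n`. -/
def cycConsecutive (n : ℕ) (a b : Fin n) : Prop :=
  b.val = (a.val + 1) % n ∨ a.val = (b.val + 1) % n

/-- An edge is a chord iff its endpoints are not consecutive in the cyclic order. -/
def IsChord (n : ℕ) (e : Sym2 (Fin n)) : Prop :=
  ∀ a b : Fin n, e = s(a, b) → ¬ cycConsecutive n a b

/-!
Together with the `n` uncrossed boundary edges the chords form a convex drawing in which every edge
is crossed at most five times, and such a drawing has at most `4 * n - 9` edges. In a minimal
counterexample to this bound, contracting `m + 1` consecutive vertices must lose more than `4 * m`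
edges, so any two consecutive vertices have at least four common neighbours. Cutting along a pair
of vertices that are not consecutive shows that at least four edges cross or equal that pair.
Counting common neighbours, a shortest chord with at least two vertices on either side cuts off a
quadrilateral `0123` with both diagonals, and `1`, `2` have exactly two common neighbours `u < w`
beyond `03`. Three crossings of `1u` and three of `2w` are thereby accounted for. The two that
remain for each of them determine the edges at `0, …, 4` so closely that contracting `0, …, 3` or
`0, …, 4` loses too few edges.
-/

open Finset

section Drawing

variable {α β : Type*} [LinearOrder α] [LinearOrder β] {k : ℕ} {V : Finset α} {W : Finset β}
  {E F : Finset (α × α)}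

/-- Two edges of a convex drawing cross. The cyclic order of the vertices is cut open to a linear
order and an edge is written as a pair whose first entry is the smaller endpoint. -/
abbrev Interleave (e f : α × α) : Prop :=
  (e.1 < f.1 ∧ f.1 < e.2 ∧ e.2 < f.2) ∨ (f.1 < e.1 ∧ e.1 < f.2 ∧ f.2 < e.2)

/-- `E` is the edge set of a convex `k`-planar drawing with vertex set `V`: every edge is crossed by
at most `k` others. Boundary edges may, but need not, belong to `E`. -/
structure IsConvexKPlanar (k : ℕ) (V : Finset α) (E : Finset (α × α)) : Prop where
  fst_mem : ∀ e ∈ E, e.1 ∈ V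
  snd_mem : ∀ e ∈ E, e.2 ∈ V
  lt : ∀ e ∈ E, e.1 < e.2
  card_crossing_le : ∀ e ∈ E, #{f ∈ E | Interleave e f} ≤ k

theorem Interleave.of_map {f : α → β} (hf : Monotone f) {e e' : α × α}
    (h : Interleave (Prod.map f f e) (Prod.map f f e')) : Interleave e e' :=
  h.imp (And.imp hf.reflect_lt (And.imp hf.reflect_lt hf.reflect_lt))
    (And.imp hf.reflect_lt (And.imp hf.reflect_lt hf.reflect_lt))

namespace IsConvexKPlanar

theorem mono {V' : Finset α} (hE : IsConvexKPlanar k V E) (hF : F ⊆ E)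
    (hfst : ∀ e ∈ F, e.1 ∈ V') (hsnd : ∀ e ∈ F, e.2 ∈ V') : IsConvexKPlanar k V' F where
  fst_mem := hfst
  snd_mem := hsnd
  lt e he := hE.lt e (hF he)
  card_crossing_le e he :=
    (card_le_card (filter_subset_filter _ hF)).trans (hE.card_crossing_le e (hF he))

theorem image {φ : α × α → β × β} (hE : IsConvexKPlanar k V E) (hfst : ∀ e ∈ E, (φ e).1 ∈ W)
    (hsnd : ∀ e ∈ E, (φ e).2 ∈ W) (hlt : ∀ e ∈ E, (φ e).1 < (φ e).2)
    (hcross : ∀ e ∈ E, ∀ f ∈ E, Interleave (φ e) (φ f) → Interleave e f) :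
    IsConvexKPlanar k W (E.image φ) where
  fst_mem := by simpa only [forall_mem_image] using hfst
  snd_mem := by simpa only [forall_mem_image] using hsnd
  lt := by simpa only [forall_mem_image] using hlt
  card_crossing_le := by
    simp only [forall_mem_image, filter_image]
    intro e he
    refine (card_image_le.trans (card_le_card fun f hf => ?_)).trans (hE.card_crossing_le e he)
    rw [mem_filter] at hf ⊢
    exact ⟨hf.1, hcross e he f hf.1 hf.2⟩

theorem union_of_uncrossed (hE : IsConvexKPlanar k V E) (hfst : ∀ e ∈ F, e.1 ∈ V)
    (hsnd : ∀ e ∈ F, e.2 ∈ V) (hlt : ∀ e ∈ F, e.1 < e.2)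
    (huncrossed : ∀ e ∈ F, ∀ f ∈ E ∪ F, ¬ Interleave e f) : IsConvexKPlanar k V (E ∪ F) where
  fst_mem e he := (mem_union.1 he).elim (hE.fst_mem e) (hfst e)
  snd_mem e he := (mem_union.1 he).elim (hE.snd_mem e) (hsnd e)
  lt e he := (mem_union.1 he).elim (hE.lt e) (hlt e)
  card_crossing_le e he := by
    rcases mem_union.1 he with heE | heF
    · have hF : {f ∈ F | Interleave e f} = ∅ :=
        filter_false_of_mem fun f hf h => huncrossed f hf e he h.symm
      rw [filter_union, hF, union_empty]
      exact hE.card_crossing_le e heE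
    · rw [filter_false_of_mem (huncrossed e heF), card_empty]
      exact k.zero_le

theorem card_crossing_sdiff_add_card_le (hE : IsConvexKPlanar k V E) {e : α × α} (he : e ∈ E)
    (hF : F ⊆ {f ∈ E | Interleave e f}) : #({f ∈ E | Interleave e f} \ F) + #F ≤ k := by
  rw [card_sdiff_add_card_eq_card hF]
  exact hE.card_crossing_le e he

theorem card_le_choose_two (hE : IsConvexKPlanar k V E) : #E ≤ (#V).choose 2 := by
  rw [← card_powersetCard]
  refine card_le_card_of_injOn (fun e => {e.1, e.2}) (fun e he => ?_) fun e he f hf hef => ?_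
  · simp [mem_powersetCard, insert_subset_iff, hE.fst_mem e he, hE.snd_mem e he,
      card_pair (hE.lt e he).ne]
  · replace hef : ({e.1, e.2} : Finset α) = {f.1, f.2} := hef
    have hfst : e.1 ∈ ({f.1, f.2} : Finset α) := by simp [← hef]
    have hsnd : e.2 ∈ ({f.1, f.2} : Finset α) := by simp [← hef]
    have he := hE.lt e he
    have hf := hE.lt f hf
    grind

theorem exists_range (hE : IsConvexKPlanar k V E) :
    ∃ E' : Finset (ℕ × ℕ), IsConvexKPlanar k (range #V) E' ∧ #E' = #E := by
  let rank : α → ℕ := fun a => #{b ∈ V | b < a}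
  have rank_mono : Monotone rank := fun a b hab =>
    card_le_card (monotone_filter_right V fun _ _ h => h.trans_le hab)
  have rank_strictMonoOn : StrictMonoOn rank V := fun a ha b _ hab =>
    card_lt_card <| (ssubset_iff_of_subset
      (monotone_filter_right V fun _ _ h => h.trans hab)).2
        ⟨a, mem_filter.2 ⟨ha, hab⟩, fun h => lt_irrefl a (mem_filter.1 h).2⟩
  have rank_lt : ∀ a ∈ V, rank a ∈ range #V := fun a ha =>
    mem_range.2 <| card_lt_card <| filter_ssubset.2 ⟨a, ha, lt_irrefl a⟩
  refine ⟨E.image (Prod.map rank rank), hE.image (fun e he => rank_lt _ (hE.fst_mem e he))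
    (fun e he => rank_lt _ (hE.snd_mem e he))
    (fun e he => rank_strictMonoOn (hE.fst_mem e he) (hE.snd_mem e he) (hE.lt e he))
    fun _ _ _ _ => Interleave.of_map rank_mono, card_image_of_injOn fun e he f hf hef => ?_⟩
  exact Prod.ext (rank_strictMonoOn.injOn (hE.fst_mem e he) (hE.fst_mem f hf) (Prod.mk.inj hef).1)
    (rank_strictMonoOn.injOn (hE.snd_mem e he) (hE.snd_mem f hf) (Prod.mk.inj hef).2)

end IsConvexKPlanar

end Drawing

/-- A drawing on `0, …, n - 1` that violates the bound `#E + 9 ≤ 4 * n` for convex `5`-planar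
drawings while the bound holds for all smaller numbers of vertices. -/
structure IsMinimalCounterexample (n : ℕ) (E : Finset (ℕ × ℕ)) : Prop where
  three_le : 3 ≤ n
  planar : IsConvexKPlanar 5 (range n) E
  lt_card : 4 * n < #E + 9
  card_le_of_lt : ∀ n', 3 ≤ n' → n' < n →
    ∀ E' : Finset (ℕ × ℕ), IsConvexKPlanar 5 (range n') E' → #E' + 9 ≤ 4 * n'

/-- The map contracting the vertices `i, …, i + m` to `i`. -/
def collapse (i m j : ℕ) : ℕ := if i < j ∧ j ≤ i + m then i else j

theorem monotone_collapse (i m : ℕ) : Monotone (collapse i m) := by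
  intro a b hab
  grind [collapse]

/-- The vertices joined to both `i` and `j`. -/
def commonNeighbors (n : ℕ) (E : Finset (ℕ × ℕ)) (i j : ℕ) : Finset ℕ :=
  {k ∈ range n | ((i, k) ∈ E ∨ (k, i) ∈ E) ∧ ((j, k) ∈ E ∨ (k, j) ∈ E)}

theorem mem_commonNeighbors {n i j k : ℕ} {E : Finset (ℕ × ℕ)} :
    k ∈ commonNeighbors n E i j ↔
      k < n ∧ ((i, k) ∈ E ∨ (k, i) ∈ E) ∧ ((j, k) ∈ E ∨ (k, j) ∈ E) := by
  simp [commonNeighbors]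

/-- The effect on an edge of the relabelling `g` of the vertices. -/
def relabelEdge (g : ℕ → ℕ) (e : ℕ × ℕ) : ℕ × ℕ := (min (g e.1) (g e.2), max (g e.1) (g e.2))

namespace IsMinimalCounterexample

variable {n i m p q a b : ℕ} {E S : Finset (ℕ × ℕ)} {g : ℕ → ℕ}

theorem fst_lt_snd (c : IsMinimalCounterexample n E) (h : (a, b) ∈ E) : a < b := c.planar.lt _ h

theorem snd_lt (c : IsMinimalCounterexample n E) (h : (a, b) ∈ E) : b < n :=
  mem_range.1 (c.planar.snd_mem _ h)

theorem seven_le (c : IsMinimalCounterexample n E) : 7 ≤ n := by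
  by_contra! hn
  have hchoose : #E ≤ n.choose 2 := by simpa using c.planar.card_le_choose_two
  have hsmall : n.choose 2 + 9 ≤ 4 * n := by
    have hn3 := c.three_le
    interval_cases n <;> decide
  have hlt := c.lt_card
  omega

theorem card_le (c : IsMinimalCounterexample n E) {V : Finset ℕ} {F : Finset (ℕ × ℕ)}
    (hF : IsConvexKPlanar 5 V F) (h3 : 3 ≤ #V) (hn : #V < n) : #F + 9 ≤ 4 * #V := by
  obtain ⟨F', hF', hcard⟩ := hF.exists_range
  exact hcard ▸ c.card_le_of_lt _ h3 hn F' hF'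

theorem four_mul_lt_card (c : IsMinimalCounterexample n E) (hm : 0 < m) (him : i + m < n)
    (hmn : m + 3 ≤ n) (hlt : ∀ a b, (a, b) ∈ E \ S → collapse i m a < collapse i m b)
    (hinj : Set.InjOn (Prod.map (collapse i m) (collapse i m)) (E \ S : Finset (ℕ × ℕ))) :
    4 * m < #S := by
  let V : Finset ℕ := range n \ Ioc i (i + m)
  have hV : #V + m = n := by
    have hsub : Ioc i (i + m) ⊆ range n := fun j hj => by
      rw [mem_Ioc] at hj
      exact mem_range.2 (by omega)
    simpa using card_sdiff_add_card_eq_card hsub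
  have mem_V : ∀ j ∈ range n, collapse i m j ∈ V := fun j hj => by
    simp only [V, mem_sdiff, mem_range, mem_Ioc, collapse] at hj ⊢
    split_ifs <;> omega
  have hplanar : IsConvexKPlanar 5 V ((E \ S).image (Prod.map (collapse i m) (collapse i m))) :=
    (c.planar.mono sdiff_subset (fun e he => c.planar.fst_mem e (sdiff_subset he))
      fun e he => c.planar.snd_mem e (sdiff_subset he)).image
      (fun e he => mem_V _ (c.planar.fst_mem e (sdiff_subset he)))
      (fun e he => mem_V _ (c.planar.snd_mem e (sdiff_subset he)))
      (fun e he => hlt e.1 e.2 he) fun _ _ _ _ => Interleave.of_map (monotone_collapse i m)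
  have hbound := c.card_le hplanar (by omega) (by omega)
  rw [card_image_of_injOn hinj] at hbound
  have hS := le_card_sdiff S E
  have hE := c.lt_card
  omega

-- The edges joining `b` to the contracted vertices `0, …, m` become parallel, so only one of them,
-- with endpoint `r b`, survives.
theorem four_mul_lt_card_of_forall_mem_or (c : IsMinimalCounterexample n E) (hm : 0 < m)
    (hmn : m + 3 ≤ n) (r : ℕ → ℕ) (h : ∀ a b, (a, b) ∈ E → a ≤ m → (a, b) ∈ S ∨ m < b ∧ a = r b) :
    4 * m < #S := by
  have hkept : ∀ a b, (a, b) ∈ E \ S → a < b ∧ (a ≤ m → m < b ∧ a = r b) := fun a b hab =>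
    ⟨c.fst_lt_snd (mem_sdiff.1 hab).1,
      fun ha => (h a b (mem_sdiff.1 hab).1 ha).resolve_left (mem_sdiff.1 hab).2⟩
  refine c.four_mul_lt_card (i := 0) hm (by omega) hmn (fun a b hab => ?_) ?_
  · grind [collapse]
  · rintro ⟨a, b⟩ hab ⟨a', b'⟩ hab' heq
    have h1 := hkept a b hab
    have h2 := hkept a' b' hab'
    grind [collapse]

theorem four_le_card_commonNeighbors (c : IsMinimalCounterexample n E) (hi : i + 1 < n) :
    4 ≤ #(commonNeighbors n E i (i + 1)) := by
  let S : Finset (ℕ × ℕ) := insert (i, i + 1)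
    ((commonNeighbors n E i (i + 1)).image fun k => (min (i + 1) k, max (i + 1) k))
  have hkept : ∀ a b, (a, b) ∈ E \ S → (a, b) ∈ E ∧ a < b ∧ b < n ∧ (a, b) ≠ (i, i + 1) ∧
      (a = i + 1 → (i, b) ∉ E) ∧ (b = i + 1 → (a, i) ∉ E) := by
    intro a b hab
    obtain ⟨hE, hS⟩ := mem_sdiff.1 hab
    simp only [S, mem_insert, mem_image, mem_commonNeighbors, not_or, not_exists] at hS
    have hlt := c.fst_lt_snd hE
    have hbn := c.snd_lt hE
    refine ⟨hE, hlt, hbn, hS.1, ?_, ?_⟩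
    · rintro rfl h
      exact hS.2 b ⟨⟨hbn, .inl h, .inl hE⟩, by simp [hlt.le]⟩
    · rintro rfl h
      exact hS.2 a ⟨⟨by omega, .inr h, .inr hE⟩, by simp [hlt.le]⟩
  have hS : 4 * 1 < #S := by
    refine c.four_mul_lt_card (i := i) one_pos hi (by have := c.seven_le; omega)
      (fun a b hab => ?_) ?_
    · have := hkept a b hab
      grind [collapse]
    · rintro ⟨a, b⟩ hab ⟨a', b'⟩ hab' heq
      have h1 := hkept a b hab
      have h2 := hkept a' b' hab'
      clear_value S
      clear hkept hab hab'
      grind [collapse]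
  have hle : #S ≤ #(commonNeighbors n E i (i + 1)) + 1 :=
    (card_insert_le _ _).trans (Nat.succ_le_succ card_image_le)
  omega

theorem four_le_card_crossing_or_eq (c : IsMinimalCounterexample n E) (hpq : p + 2 ≤ q)
    (hqn : q < n) (hqp : q + 2 ≤ p + n) : 4 ≤ #{e ∈ E | Interleave (p, q) e ∨ e = (p, q)} := by
  let crossing := {e ∈ E | Interleave (p, q) e ∨ e = (p, q)}
  let inner := {e ∈ E | p ≤ e.1 ∧ e.2 ≤ q} ∪ {(p, q)}
  let outer := {e ∈ E | (e.1 ≤ p ∨ q ≤ e.1) ∧ (e.2 ≤ p ∨ q ≤ e.2)} ∪ {(p, q)}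
  have hlt := c.planar.lt
  have hsnd := c.planar.snd_mem
  have card_Icc : #(Icc p q) = q + 1 - p := Nat.card_Icc p q
  have card_outer : #(range (p + 1) ∪ Ico q n) = p + 1 + (n - q) := by
    rw [card_union_of_disjoint (disjoint_left.2 fun j => by grind), card_range, Nat.card_Ico]
  have hinner : #inner + 9 ≤ 4 * #(Icc p q) := by
    refine c.card_le (.union_of_uncrossed (c.planar.mono (filter_subset _ _) ?_ ?_) ?_ ?_ ?_ ?_)
      (by omega) (by omega) <;> grind
  have houter : #outer + 9 ≤ 4 * #(range (p + 1) ∪ Ico q n) := by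
    refine c.card_le (.union_of_uncrossed (c.planar.mono (filter_subset _ _) ?_ ?_) ?_ ?_ ?_ ?_)
      (by omega) (by omega) <;> grind
  have hunion : #(inner ∪ outer) + 1 ≤ #inner + #outer := by
    rw [← card_union_add_card_inter]
    gcongr
    exact card_pos.2 ⟨(p, q), by simp [inner, outer]⟩
  have hcover : E ⊆ crossing ∪ (inner ∪ outer).erase (p, q) := by
    rintro ⟨a, b⟩ he
    have := c.fst_lt_snd he
    grind
  have hmem : (p, q) ∈ inner ∪ outer := by simp [inner]
  have hE := (card_le_card hcover).trans (card_union_le _ _)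
  rw [card_erase_of_mem hmem] at hE
  have := c.lt_card
  change 4 ≤ #crossing
  omega

theorem relabel (c : IsMinimalCounterexample n E) (hg : ∀ j < n, g j < n)
    (hinj : Set.InjOn g (range n))
    (hcross : ∀ e ∈ E, ∀ f ∈ E, Interleave (relabelEdge g e) (relabelEdge g f) → Interleave e f) :
    IsMinimalCounterexample n (E.image (relabelEdge g)) where
  three_le := c.three_le
  planar := by
    have hfst : ∀ e ∈ E, g e.1 < n := fun e he => hg _ (mem_range.1 (c.planar.fst_mem e he))
    have hsnd : ∀ e ∈ E, g e.2 < n := fun e he => hg _ (mem_range.1 (c.planar.snd_mem e he))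
    refine c.planar.image (fun e he => mem_range.2 (min_lt_of_left_lt (hfst e he)))
      (fun e he => mem_range.2 (max_lt (hfst e he) (hsnd e he))) (fun e he => ?_) hcross
    exact min_lt_max.2 fun h =>
      (c.planar.lt e he).ne (hinj (c.planar.fst_mem e he) (c.planar.snd_mem e he) h)
  lt_card := by
    rw [card_image_of_injOn]
    · exact c.lt_card
    rintro ⟨a, b⟩ he ⟨a', b'⟩ hf h
    have hab := c.fst_lt_snd he
    have hab' := c.fst_lt_snd hf
    have hbn := c.snd_lt he
    have hbn' := c.snd_lt hf
    have haa' := hinj.eq_iff (x := a) (y := a')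
    have hbb' := hinj.eq_iff (x := b) (y := b')
    have hab'' := hinj.eq_iff (x := a) (y := b')
    have hba' := hinj.eq_iff (x := b) (y := a')
    simp only [coe_range, Set.mem_Iio] at haa' hbb' hab'' hba'
    grind [relabelEdge]
  card_le_of_lt := c.card_le_of_lt

theorem exists_rotate (c : IsMinimalCounterexample n E) (hp : p < n) :
    ∃ E', IsMinimalCounterexample n E' ∧
      ∀ a b, a < b → b + p < n → ((a, b) ∈ E' ↔ (a + p, b + p) ∈ E) := by
  let g : ℕ → ℕ := fun j => if p ≤ j then j - p else j + n - p
  refine ⟨E.image (relabelEdge g), c.relabel (by grind) (fun a ha b hb => ?_) ?_, ?_⟩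
  · simp only [coe_range, Set.mem_Iio] at ha hb
    grind
  · rintro ⟨a, b⟩ he ⟨a', b'⟩ hf
    have := c.fst_lt_snd he
    have := c.snd_lt he
    have := c.fst_lt_snd hf
    have := c.snd_lt hf
    simp only [Interleave, relabelEdge, g]
    split_ifs <;> omega
  · intro a b hab hb
    rw [mem_image]
    constructor
    · rintro ⟨⟨a', b'⟩, he, h⟩
      have := c.fst_lt_snd he
      have := c.snd_lt he
      grind [relabelEdge]
    · exact fun he => ⟨_, he, by grind [relabelEdge]⟩

theorem exists_reflect (c : IsMinimalCounterexample n E) :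
    ∃ E', IsMinimalCounterexample n E' ∧ (∀ a b, b ≤ 3 → (a, b) ∈ E → (3 - b, 3 - a) ∈ E') ∧
      ∀ a b, a ≤ 3 → 3 < b → (a, b) ∈ E → (3 - a, n + 3 - b) ∈ E' := by
  let g : ℕ → ℕ := fun j => if j ≤ 3 then 3 - j else n + 3 - j
  have hn := c.seven_le
  refine ⟨E.image (relabelEdge g), c.relabel (by grind) (fun a ha b hb => ?_) ?_,
    fun a b hb he => ?_, fun a b ha hb he => ?_⟩
  · simp only [coe_range, Set.mem_Iio] at ha hb
    grind
  · rintro ⟨a, b⟩ he ⟨a', b'⟩ hf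
    have := c.fst_lt_snd he
    have := c.snd_lt he
    have := c.fst_lt_snd hf
    have := c.snd_lt hf
    simp only [Interleave, relabelEdge, g]
    split_ifs <;> omega
  · have := c.fst_lt_snd he
    exact mem_image.2 ⟨_, he, by grind [relabelEdge]⟩
  · have := c.snd_lt he
    exact mem_image.2 ⟨_, he, by grind [relabelEdge]⟩

theorem exists_long_chord (c : IsMinimalCounterexample n E) :
    ∃ e ∈ E, e.1 + 3 ≤ e.2 ∧ e.2 + 3 ≤ e.1 + n := by
  have hn := c.seven_le
  have hcard := c.four_le_card_commonNeighbors (i := 0) (by omega)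
  have hlt : #({2, n - 1, n - 2} : Finset ℕ) < #(commonNeighbors n E 0 1) :=
    card_le_three.trans_lt hcard
  obtain ⟨k, hk, hk'⟩ := exists_mem_notMem_of_card_lt_card hlt
  simp only [mem_commonNeighbors, mem_insert, mem_singleton, not_or] at hk hk'
  have h0 : (0, k) ∈ E := hk.2.1.resolve_right fun h => by have := c.fst_lt_snd h; omega
  have h1 : k ≠ 1 := by
    rintro rfl
    rcases hk.2.2 with h | h <;> exact (c.fst_lt_snd h).false
  have := c.fst_lt_snd h0
  exact ⟨_, h0, by grind, by grind⟩

theorem exists_shortest_long_chord (c : IsMinimalCounterexample n E) :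
    ∃ E' m, IsMinimalCounterexample n E' ∧ 3 ≤ m ∧ m + 3 ≤ n ∧ (0, m) ∈ E' ∧
      ∀ a b, (a, b) ∈ E' → b ≤ m → a + 3 ≤ b → (a, b) = (0, m) := by
  let longChords := {e ∈ E | e.1 + 3 ≤ e.2 ∧ e.2 + 3 ≤ e.1 + n}
  have hne : longChords.Nonempty := by
    obtain ⟨e, he, hlong⟩ := c.exists_long_chord
    exact ⟨e, mem_filter.2 ⟨he, hlong⟩⟩
  obtain ⟨⟨p, q⟩, hpq, hmin⟩ := exists_min_image longChords (fun e => e.2 - e.1) hne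
  obtain ⟨hE, hshort, hlong⟩ := mem_filter.1 hpq
  have hq := c.snd_lt hE
  obtain ⟨E', c', hE'⟩ := c.exists_rotate (p := p) (by omega)
  refine ⟨E', q - p, c', by omega, by omega, ?_, fun a b hab hb hb' => ?_⟩
  · rw [hE' _ _ (by omega) (by omega)]
    convert hE using 2 <;> omega
  · have hab' := (hE' a b (by omega) (by omega)).1 hab
    have hle := hmin _ (mem_filter.2 ⟨hab', by dsimp only; omega, by dsimp only at hlong ⊢; omega⟩)
    rw [Prod.mk.injEq]
    dsimp only at hle
    omega

theorem commonNeighbors_filter_le_subset (c : IsMinimalCounterexample n E)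
    (hshort : ∀ a b, (a, b) ∈ E → b ≤ m → a + 3 ≤ b → (a, b) = (0, m)) (hi : 0 < i)
    (him : i + 1 < m) : {k ∈ commonNeighbors n E i (i + 1) | k ≤ m} ⊆ {i - 1, i + 2} := by
  intro k hk
  simp only [mem_filter, mem_commonNeighbors, mem_insert, mem_singleton] at hk ⊢
  have hlt : ∀ a b, (a, b) ∈ E → a < b := fun _ _ => c.fst_lt_snd
  obtain ⟨⟨-, h1 | h1, h2 | h2⟩, hkm⟩ := hk <;>
    grind [hlt _ _ h1, hlt _ _ h2, hshort _ _ h1, hshort _ _ h2]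

theorem two_le_card_commonNeighbors_filter_lt (c : IsMinimalCounterexample n E) (hmn : m ≤ n)
    (hshort : ∀ a b, (a, b) ∈ E → b ≤ m → a + 3 ≤ b → (a, b) = (0, m)) (hi : 0 < i)
    (him : i + 1 < m) : 2 ≤ #{k ∈ commonNeighbors n E i (i + 1) | m < k} := by
  have hcard := c.four_le_card_commonNeighbors (i := i) (by omega)
  have hle := (card_le_card (c.commonNeighbors_filter_le_subset hshort hi him)).trans card_le_two
  have hsplit := card_filter_add_card_filter_not (s := commonNeighbors n E i (i + 1)) (· ≤ m)
  simp only [not_le] at hsplit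
  omega

theorem eq_three_of_shortest (c : IsMinimalCounterexample n E) (hm : 3 ≤ m) (h0m : (0, m) ∈ E)
    (hshort : ∀ a b, (a, b) ∈ E → b ≤ m → a + 3 ≤ b → (a, b) = (0, m)) : m = 3 := by
  have hmn := c.snd_lt h0m
  have hfiber : ∀ i ∈ Ioo 0 m, 2 ≤ #{e ∈ {e ∈ E | Interleave (0, m) e} | e.1 = i} := by
    intro i hi
    obtain ⟨j, hj, hjm, hij⟩ : ∃ j, 0 < j ∧ j + 1 < m ∧ (i = j ∨ i = j + 1) := by
      rw [mem_Ioo] at hi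
      rcases lt_or_ge (i + 1) m with h | h
      · exact ⟨i, hi.1, h, .inl rfl⟩
      · exact ⟨i - 1, by omega, by omega, by omega⟩
    refine (c.two_le_card_commonNeighbors_filter_lt hmn.le hshort hj hjm).trans
      (card_le_card_of_injOn (fun k => (i, k)) (fun k hk => ?_) (by simp))
    simp only [coe_filter, Set.mem_ofPred_eq, mem_commonNeighbors, mem_filter] at hk ⊢
    have := @c.fst_lt_snd
    grind
  have hmem : ∀ e ∈ {e ∈ E | Interleave (0, m) e}, e.1 ∈ Ioo 0 m := by grind
  have hcount := (mul_card_image_le_card_of_maps_to hmem 2 hfiber).trans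
    (c.planar.card_crossing_le _ h0m)
  rw [Nat.card_Ioo] at hcount
  omega

theorem card_commonNeighbors_filter_lt_le (c : IsMinimalCounterexample n E) (h03 : (0, 3) ∈ E) :
    #{k ∈ commonNeighbors n E 1 2 | 3 < k} ≤ 2 := by
  have hsub : {1, 2} ×ˢ {k ∈ commonNeighbors n E 1 2 | 3 < k} ⊆
      {e ∈ E | Interleave (0, 3) e} := by
    have := @c.fst_lt_snd
    grind [mem_commonNeighbors]
  have hle := (card_le_card hsub).trans (c.planar.card_crossing_le _ h03)
  rw [card_product, card_pair (by decide)] at hle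
  omega

end IsMinimalCounterexample

/-- A minimal counterexample in which the edge `03` cuts off a quadrilateral `0123` both of whose
diagonals are present, and `u < w` are the vertices beyond `03` that are joined to both `1`
and `2`. -/
structure IsQuadConfiguration (n : ℕ) (E : Finset (ℕ × ℕ)) (u w : ℕ) : Prop
    extends IsMinimalCounterexample n E where
  three_lt : 3 < u
  lt : u < w
  mem₀₂ : (0, 2) ∈ E
  mem₀₃ : (0, 3) ∈ E
  mem₁₃ : (1, 3) ∈ E
  mem₁u : (1, u) ∈ E
  mem₁w : (1, w) ∈ E
  mem₂u : (2, u) ∈ E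
  mem₂w : (2, w) ∈ E

theorem IsMinimalCounterexample.exists_isQuadConfiguration {n : ℕ} {E : Finset (ℕ × ℕ)}
    (c : IsMinimalCounterexample n E) : ∃ E' u w, IsQuadConfiguration n E' u w := by
  obtain ⟨E', m, c, hm, hmn, h03, hshort⟩ := c.exists_shortest_long_chord
  obtain rfl : m = 3 := c.eq_three_of_shortest hm h03 hshort
  let near := {k ∈ commonNeighbors n E' 1 2 | k ≤ 3}
  let far := {k ∈ commonNeighbors n E' 1 2 | 3 < k}
  have hfar_two : 2 ≤ #far :=
    c.two_le_card_commonNeighbors_filter_lt (by omega) hshort one_pos (by omega)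
  have hfar : #far = 2 := (c.card_commonNeighbors_filter_lt_le h03).antisymm hfar_two
  have hnear : near = {0, 3} := by
    refine eq_of_subset_of_card_le (c.commonNeighbors_filter_le_subset hshort one_pos (by omega)) ?_
    have hsplit := card_filter_add_card_filter_not (s := commonNeighbors n E' 1 2) (· ≤ 3)
    simp only [not_le] at hsplit
    have hcard : 4 ≤ #(commonNeighbors n E' 1 2) := c.four_le_card_commonNeighbors (by omega)
    rw [card_pair (by decide)]
    change #near + #far = _ at hsplit
    omega
  obtain ⟨u, w, huw, hfar⟩ : ∃ u w, u < w ∧ far = {u, w} := by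
    obtain ⟨x, y, hxy, hfar⟩ := card_eq_two.1 hfar
    rcases hxy.lt_or_gt with h | h
    · exact ⟨x, y, h, hfar⟩
    · exact ⟨y, x, h, hfar.trans (pair_comm x y)⟩
  have hu : u ∈ far := by simp [hfar]
  have hw : w ∈ far := by simp [hfar]
  have h0 : 0 ∈ near := by simp [hnear]
  have h3 : 3 ∈ near := by simp [hnear]
  have := @c.fst_lt_snd
  clear hfar hnear hshort
  refine ⟨E', u, w, c, ?_, huw, ?_, h03, ?_, ?_, ?_, ?_, ?_⟩ <;> grind [mem_commonNeighbors]

namespace IsQuadConfiguration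

variable {n u w : ℕ} {E : Finset (ℕ × ℕ)}

theorem w_lt (q : IsQuadConfiguration n E u w) : w < n := q.snd_lt q.mem₂w

theorem exists_reflect (q : IsQuadConfiguration n E u w) :
    ∃ E', IsQuadConfiguration n E' (n + 3 - w) (n + 3 - u) := by
  obtain ⟨E', c, hnear, hfar⟩ := q.toIsMinimalCounterexample.exists_reflect
  have hu := q.three_lt
  have huw := q.lt
  have hw := q.w_lt
  exact ⟨E', c, by omega, by omega, hnear 1 3 le_rfl q.mem₁₃, hnear 0 3 le_rfl q.mem₀₃,
    hnear 0 2 (by omega) q.mem₀₂, hfar 2 w (by omega) (by omega) q.mem₂w,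
    hfar 2 u (by omega) hu q.mem₂u, hfar 1 w (by omega) (by omega) q.mem₁w,
    hfar 1 u (by omega) hu q.mem₁u⟩

theorem card_crossing_one_sdiff_le (q : IsQuadConfiguration n E u w) :
    #({e ∈ E | Interleave (1, u) e} \ {(0, 2), (0, 3), (2, w)}) ≤ 2 := by
  have hsub : {(0, 2), (0, 3), (2, w)} ⊆ {e ∈ E | Interleave (1, u) e} := by
    grind [q.three_lt, q.lt, q.mem₀₂, q.mem₀₃, q.mem₂w]
  have hcard := q.planar.card_crossing_sdiff_add_card_le q.mem₁u hsub
  rw [card_eq_three.2 ⟨_, _, _, by simp, by simp, by simp, rfl⟩] at hcard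
  omega

theorem card_crossing_two_sdiff_le (q : IsQuadConfiguration n E u w) :
    #({e ∈ E | Interleave (2, w) e} \ {(0, 3), (1, 3), (1, u)}) ≤ 2 := by
  have hu := q.three_lt
  have hsub : {(0, 3), (1, 3), (1, u)} ⊆ {e ∈ E | Interleave (2, w) e} := by
    grind [q.three_lt, q.lt, q.mem₀₃, q.mem₁₃, q.mem₁u]
  have hcard := q.planar.card_crossing_sdiff_add_card_le q.mem₂w hsub
  rw [card_eq_three.2 ⟨_, _, _, by simp, by simp, by simp [hu.ne], rfl⟩] at hcard
  omega

theorem card_crossing_zero_three_le (q : IsQuadConfiguration n E u w) :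
    #{e ∈ E | (e.1 = 1 ∨ e.1 = 2) ∧ 3 < e.2 ∧ e.2 ≠ u ∧ e.2 ≠ w} ≤ 1 := by
  have hu := q.three_lt
  have huw := q.lt
  have hsub : ({1, 2} ×ˢ {u, w} : Finset (ℕ × ℕ)) ⊆ {e ∈ E | Interleave (0, 3) e} := by
    grind [q.mem₁u, q.mem₁w, q.mem₂u, q.mem₂w]
  have hcard := q.planar.card_crossing_sdiff_add_card_le q.mem₀₃ hsub
  rw [card_product, card_pair (by decide), card_pair huw.ne] at hcard
  have hle : #{e ∈ E | (e.1 = 1 ∨ e.1 = 2) ∧ 3 < e.2 ∧ e.2 ≠ u ∧ e.2 ≠ w} ≤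
      #({e ∈ E | Interleave (0, 3) e} \ {1, 2} ×ˢ {u, w}) :=
    card_le_card fun e => by
      simp only [mem_filter, mem_sdiff, mem_product, mem_insert, mem_singleton]
      grind
  omega

theorem succ_lt_of_eq_four (q : IsQuadConfiguration n E u w) (hu : u = 4) : w + 1 < n := by
  subst hu
  by_contra hw
  have hwn := q.w_lt
  have hn := q.seven_le
  let listed : List (ℕ × ℕ) := [(0, 1), (0, 2), (0, 3), (0, w), (1, 2), (1, 3), (1, 4), (1, w),
    (2, 3), (2, 4), (2, w), (3, 4)]
  let cross₁ := {e ∈ E | Interleave (1, 4) e} \ {(0, 2), (0, 3), (2, w)}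
  let cross₂ := {e ∈ E | Interleave (2, w) e} \ {(0, 3), (1, 3), (1, 4)}
  have hlt : 4 * 4 < #(listed.toFinset ∪ cross₁ ∪ cross₂) := by
    refine q.four_mul_lt_card_of_forall_mem_or (by omega) (by omega) (fun _ => 4)
      fun a b he ha => ?_
    have hab := q.fst_lt_snd he
    have hbn := q.snd_lt he
    simp only [listed, cross₁, cross₂, mem_union, mem_sdiff, mem_filter, mem_insert,
      mem_singleton, Prod.mk.injEq, Interleave, he, List.mem_toFinset, List.mem_cons,
      List.not_mem_nil, true_and]
    clear_value listed cross₁ cross₂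
    clear he q
    interval_cases a <;> grind
  have h₁ : #cross₁ ≤ 2 := q.card_crossing_one_sdiff_le
  have h₂ : #cross₂ ≤ 2 := q.card_crossing_two_sdiff_le
  have hlisted : #listed.toFinset ≤ 12 := listed.toFinset_card_le
  have hunion := (card_union_le (listed.toFinset ∪ cross₁) cross₂).trans
    (Nat.add_le_add_right (card_union_le listed.toFinset cross₁) _)
  omega

end IsQuadConfiguration

theorem IsMinimalCounterexample.exists_isQuadConfiguration_succ_lt {n : ℕ} {E : Finset (ℕ × ℕ)}
    (c : IsMinimalCounterexample n E) :
    ∃ E' u w, IsQuadConfiguration n E' u w ∧ w + 1 < n := by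
  obtain ⟨E', u, w, q⟩ := c.exists_isQuadConfiguration
  by_cases hw : w + 1 < n
  · exact ⟨E', u, w, q, hw⟩
  · obtain ⟨E'', q'⟩ := q.exists_reflect
    have hu : u ≠ 4 := fun hu => hw (q.succ_lt_of_eq_four hu)
    have h3u := q.three_lt
    have huw := q.lt
    have hwn := q.w_lt
    exact ⟨E'', _, _, q', by omega⟩

/-- A quadrilateral configuration in which the vertices `1` and `2` have no neighbours beyond `3`
other than `u`, `w` and, for the vertex `s` alone, `z`, and in which the vertex `0` has no
neighbours between `3` and `w`. -/
structure IsReducedConfiguration (n : ℕ) (E : Finset (ℕ × ℕ)) (u w s z : ℕ) : Prop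
    extends IsQuadConfiguration n E u w where
  succ_lt : w + 1 < n
  lt_z : w < z
  eq_or_eq_or_eq : ∀ a b, (a, b) ∈ E → a = 1 ∨ a = 2 → 3 < b → b = u ∨ b = w ∨ a = s ∧ b = z
  le_or_le : ∀ b, (0, b) ∈ E → b ≤ 3 ∨ w ≤ b

theorem IsQuadConfiguration.exists_isReducedConfiguration {n u w : ℕ} {E : Finset (ℕ × ℕ)}
    (q : IsQuadConfiguration n E u w) (hw : w + 1 < n) :
    ∃ s z, IsReducedConfiguration n E u w s z := by
  have h3u := q.three_lt
  have huw := q.lt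
  let X := {e ∈ E | 3 ≤ e.1 ∧ e.1 < w ∧ w < e.2}
  let Y := {e ∈ E | e.1 = 0 ∧ 3 < e.2 ∧ e.2 < w}
  let far := {e ∈ E | (e.1 = 1 ∨ e.1 = 2) ∧ 3 < e.2 ∧ e.2 ≠ u ∧ e.2 ≠ w}
  let Z := {e ∈ far | w < e.2}
  have hXY : #X + #Y ≤ 2 := by
    rw [← card_union_of_disjoint (disjoint_left.2 fun e => by grind)]
    exact (card_le_card fun e => by grind).trans q.card_crossing_two_sdiff_le
  have hfar : #far ≤ 1 := q.card_crossing_zero_three_le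
  have hZfar : Z ⊆ far := filter_subset _ _
  have hsplit : 4 ≤ #X + #Z + 1 := by
    refine (q.four_le_card_crossing_or_eq (p := 0) (q := w) (by omega) (by omega)
      (by omega)).trans ?_
    refine (card_le_card (t := X ∪ Z ∪ {(0, w)}) fun e => ?_).trans
      ((card_union_le _ _).trans (Nat.add_le_add_right (card_union_le _ _) _))
    grind
  have hZ := card_le_card hZfar
  have hY : Y = ∅ := card_eq_zero.1 (by omega)
  obtain ⟨⟨s, z⟩, hsz⟩ := card_eq_one.1 (show #far = 1 by omega)
  have hmem : (s, z) ∈ Z := by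
    rw [eq_of_subset_of_card_le hZfar (by omega), hsz]
    exact mem_singleton_self _
  refine ⟨s, z, q, hw, (mem_filter.1 hmem).2, fun a b he ha hb => ?_, fun b he => ?_⟩
  · have := mem_singleton (a := (s, z)) (b := (a, b))
    rw [← hsz, mem_filter, Prod.mk.injEq] at this
    grind
  · by_contra! hb
    exact notMem_empty (0, b) (hY ▸ mem_filter.2 ⟨he, rfl, hb⟩)

namespace IsReducedConfiguration

variable {n u w s z : ℕ} {E : Finset (ℕ × ℕ)}

theorem u_eq_four (r : IsReducedConfiguration n E u w s z) : u = 4 := by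
  have h3u := r.three_lt
  have huw := r.lt
  have hwn := r.succ_lt
  have hz := r.lt_z
  by_contra hu
  have hsplit := r.four_le_card_crossing_or_eq (p := 3) (q := u) (by omega) (by omega) (by omega)
  have hle : #{e ∈ E | Interleave (3, u) e ∨ e = (3, u)} ≤
      #({e ∈ E | Interleave (1, u) e} \ {(0, 2), (0, 3), (2, w)} ∪ {(3, u)}) := by
    refine card_le_card fun e => ?_
    have := r.le_or_le e.2
    have := r.eq_or_eq_or_eq e.1 e.2
    grind
  have := hle.trans (card_union_le _ _)
  have := r.card_crossing_one_sdiff_le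
  rw [card_singleton] at *
  omega

theorem s_eq_one (r : IsReducedConfiguration n E u w s z) : s = 1 := by
  obtain rfl := r.u_eq_four
  by_contra hs
  have hsub : commonNeighbors n E 0 1 ⊆ {2, 3, w} := by
    intro k
    have h0 := r.le_or_le k
    have h1 := r.eq_or_eq_or_eq 1 k
    have hlt := @r.fst_lt_snd
    have := r.lt
    rw [mem_commonNeighbors]
    grind
  have hle := (card_le_card hsub).trans card_le_three
  have hn := r.seven_le
  have hcard : 4 ≤ #(commonNeighbors n E 0 1) := r.four_le_card_commonNeighbors (by omega)
  omega

theorem mem₃w (r : IsReducedConfiguration n E u w s z) : (3, w) ∈ E := by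
  obtain rfl := r.u_eq_four
  obtain rfl := r.s_eq_one
  have hw := r.lt
  have hsub : commonNeighbors n E 2 3 ⊆ {0, 1, 4, w} := by
    intro k
    have h2 := r.eq_or_eq_or_eq 2 k
    have hlt := @r.fst_lt_snd
    rw [mem_commonNeighbors]
    grind
  have hn := r.seven_le
  have hcard : 4 ≤ #(commonNeighbors n E 2 3) := r.four_le_card_commonNeighbors (by omega)
  have hw' : w ∈ commonNeighbors n E 2 3 := by
    rw [eq_of_subset_of_card_le hsub (card_le_four.trans hcard)]
    simp
  exact (mem_commonNeighbors.1 hw').2.2.resolve_right fun h => by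
    have := r.fst_lt_snd h
    omega

theorem exists_third_neighbor (r : IsReducedConfiguration n E u w s z) :
    ∃ x, 4 < x ∧ x ≠ w ∧ (3, x) ∈ E ∧ (4, x) ∈ E ∧ ∀ b, (3, b) ∈ E → b = 4 ∨ b = w ∨ b = x := by
  obtain rfl := r.u_eq_four
  have hw := r.lt
  let J := {j ∈ range n | 4 < j ∧ (3, j) ∈ E}
  have hJ : #J ≤ 2 := by
    refine (card_le_card_of_injOn (fun j => (3, j)) (fun j hj => ?_) (by simp)).trans
      r.card_crossing_one_sdiff_le
    simp only [mem_coe]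
    grind
  have hsub : commonNeighbors n E 3 4 ⊆ {1, 2} ∪ J := by
    intro k
    have h0 := r.le_or_le 4
    have hlt := @r.fst_lt_snd
    rw [mem_commonNeighbors]
    grind
  have hn := r.seven_le
  have hcard : 4 ≤ #(commonNeighbors n E 3 4) := r.four_le_card_commonNeighbors (by omega)
  have hunion : #({1, 2} ∪ J) ≤ 2 + #J := card_union_le _ _
  have hle := card_le_card hsub
  have heq : commonNeighbors n E 3 4 = {1, 2} ∪ J := eq_of_subset_of_card_le hsub (by omega)
  have hwJ : w ∈ J := mem_filter.2 ⟨mem_range.2 r.w_lt, hw, r.mem₃w⟩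
  obtain ⟨x, hx⟩ := card_eq_one.1 (show #(J.erase w) = 1 by rw [card_erase_of_mem hwJ]; omega)
  have hxJ : x ∈ J.erase w := hx ▸ mem_singleton_self x
  obtain ⟨-, h4x, h3x⟩ := mem_filter.1 (mem_of_mem_erase hxJ)
  refine ⟨x, h4x, ne_of_mem_erase hxJ, h3x, ?_, fun b hb => ?_⟩
  · have hx' : x ∈ commonNeighbors n E 3 4 := heq ▸ mem_union_right _ (mem_of_mem_erase hxJ)
    refine (mem_commonNeighbors.1 hx').2.2.resolve_right fun h => ?_
    have := r.fst_lt_snd h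
    omega
  · have hb' : b ∈ J.erase w ↔ b = x := hx ▸ mem_singleton
    have hbn := r.snd_lt hb
    have h3b := r.fst_lt_snd hb
    rw [mem_erase, mem_filter, mem_range] at hb'
    grind

theorem eq_of_mem₁ (r : IsReducedConfiguration n E u w s z) {b : ℕ} (h : (1, b) ∈ E) :
    b = 2 ∨ b = 3 ∨ b = 4 ∨ b = w ∨ b = z := by
  have := r.fst_lt_snd h
  have := r.u_eq_four
  have := r.eq_or_eq_or_eq 1 b h
  omega

theorem eq_of_mem₂ (r : IsReducedConfiguration n E u w s z) {b : ℕ} (h : (2, b) ∈ E) :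
    b = 3 ∨ b = 4 ∨ b = w := by
  have := r.fst_lt_snd h
  have := r.u_eq_four
  have := r.s_eq_one
  have := r.eq_or_eq_or_eq 2 b h
  omega

theorem w_le {x : ℕ} (r : IsReducedConfiguration n E u w s z) (h4x : 4 < x)
    (h3 : ∀ b, (3, b) ∈ E → b = 4 ∨ b = w ∨ b = x) : w ≤ x := by
  by_contra! hxw
  let S : List (ℕ × ℕ) := [(0, 1), (0, 2), (0, 3), (1, 2), (1, 3), (1, 4), (1, w), (1, z),
    (2, 3), (2, 4), (2, w), (3, w)]
  have hn := r.seven_le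
  refine (List.toFinset_card_le S).not_gt <| r.four_mul_lt_card_of_forall_mem_or (m := 3)
    (by omega) (by omega) (fun b => if b = 4 ∨ b = x then 3 else 0) fun a b he ha => ?_
  have hab := r.fst_lt_snd he
  have h0 := r.le_or_le b
  have h1 := r.eq_of_mem₁ (b := b)
  have h2 := r.eq_of_mem₂ (b := b)
  simp only [S, List.mem_toFinset, List.mem_cons, List.not_mem_nil, Prod.mk.injEq]
  interval_cases a <;> grind

theorem le_w {x : ℕ} (r : IsReducedConfiguration n E u w s z) (h3x : (3, x) ∈ E)
    (h4x : (4, x) ∈ E) (h3 : ∀ b, (3, b) ∈ E → b = 4 ∨ b = w ∨ b = x) : x ≤ w := by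
  by_contra! hwx
  obtain rfl := r.u_eq_four
  have hw := r.lt
  have h4 : ∀ b, (4, b) ∈ E → w < b → b = x := by
    intro b h4b hwb
    by_contra hbx
    have hsub : {(3, x), (4, x), (4, b)} ⊆
        {e ∈ E | Interleave (2, w) e} \ {(0, 3), (1, 3), (1, 4)} := by grind
    have hcard := (card_le_card hsub).trans r.card_crossing_two_sdiff_le
    rw [card_eq_three.2 ⟨_, _, _, by simp, by simp, by simpa using Ne.symm hbx, rfl⟩] at hcard
    omega
  let S : List (ℕ × ℕ) := [(0, 1), (0, 2), (0, 3), (1, 2), (1, 3), (1, 4), (1, w), (1, z),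
    (2, 3), (2, 4), (2, w), (3, 4), (3, w), (3, x), (4, w), (4, x)]
  have hn := r.seven_le
  refine (List.toFinset_card_le S).not_gt <| r.four_mul_lt_card_of_forall_mem_or (m := 4)
    (by omega) (by omega) (fun b => if b < w then 4 else 0) fun a b he ha => ?_
  have hab := r.fst_lt_snd he
  have h0 := r.le_or_le b
  have h1 := r.eq_of_mem₁ (b := b)
  have h2 := r.eq_of_mem₂ (b := b)
  simp only [S, List.mem_toFinset, List.mem_cons, List.not_mem_nil, Prod.mk.injEq]
  interval_cases a <;> grind

end IsReducedConfiguration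

theorem not_isMinimalCounterexample (n : ℕ) (E : Finset (ℕ × ℕ)) :
    ¬ IsMinimalCounterexample n E := by
  intro c
  obtain ⟨E', u, w, q, hw⟩ := c.exists_isQuadConfiguration_succ_lt
  obtain ⟨s, z, r⟩ := q.exists_isReducedConfiguration hw
  obtain ⟨x, h4lt, hxw, h3x, h4x, h3⟩ := r.exists_third_neighbor
  exact hxw ((r.le_w h3x h4x h3).antisymm (r.w_le h4lt h3))

theorem IsConvexKPlanar.card_add_nine_le {n : ℕ} {E : Finset (ℕ × ℕ)}
    (hE : IsConvexKPlanar 5 (range n) E) (hn : 3 ≤ n) : #E + 9 ≤ 4 * n := by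
  induction n using Nat.strong_induction_on generalizing E with
  | _ n ih =>
    by_contra! hlt
    exact not_isMinimalCounterexample n E ⟨hn, hE, hlt, fun n' h3 hn' E' hE' => ih n' hn' hE' h3⟩

theorem IsConvexKPlanar.card_chords_add_nine_le {n : ℕ} {E : Finset (ℕ × ℕ)}
    (hE : IsConvexKPlanar 5 (range n) E) (hn : 3 ≤ n)
    (hchord : ∀ e ∈ E, e.1 + 1 < e.2 ∧ e.2 + 1 < e.1 + n) : #E + 9 ≤ 3 * n := by
  let boundary : Finset (ℕ × ℕ) := insert (0, n - 1) ((range (n - 1)).image fun i => (i, i + 1))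
  have hcard : #boundary = n := by
    have hinj : Function.Injective fun i : ℕ => (i, i + 1) := fun i j h => (Prod.mk.inj h).1
    rw [card_insert_of_notMem (by grind), card_image_of_injective _ hinj, card_range]
    omega
  have hdisjoint : Disjoint E boundary := disjoint_left.2 fun e he => by grind
  have hunion : IsConvexKPlanar 5 (range n) (E ∪ boundary) := by
    have := hE.fst_mem
    have := hE.snd_mem
    refine hE.union_of_uncrossed ?_ ?_ ?_ ?_ <;> grind
  have hbound := hunion.card_add_nine_le hn
  rw [card_union_of_disjoint hdisjoint, hcard] at hbound
  omega

section Transfer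

variable {n : ℕ}

/-- The edge of a convex drawing of `ℕ` given by an edge on `Fin n`. -/
def endpoints (e : Sym2 (Fin n)) : ℕ × ℕ := (e.inf.val, e.sup.val)

theorem endpoints_mk {a b : Fin n} (h : a < b) : endpoints s(a, b) = (a.val, b.val) := by
  simp [endpoints, h.le]

theorem endpoints_injective : Function.Injective (endpoints (n := n)) := by
  intro e f h
  rw [endpoints, endpoints, Prod.mk.injEq] at h
  exact Sym2.inf_eq_inf_and_sup_eq_sup.1 ⟨Fin.ext h.1, Fin.ext h.2⟩

theorem exists_lt_of_not_isDiag {α : Type*} [LinearOrder α] {e : Sym2 α} (he : ¬ e.IsDiag) :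
    ∃ a b : α, a < b ∧ e = s(a, b) := by
  induction e with
  | _ a b =>
    rcases lt_or_gt_of_ne (mt Sym2.mk_isDiag_iff.2 he) with h | h
    · exact ⟨a, b, h, rfl⟩
    · exact ⟨b, a, h, Sym2.eq_swap⟩

theorem cycBtw_iff {a b : Fin n} (h : a < b) (x : Fin n) : cycBtw n a b x ↔ a < x ∧ x < b := by
  have hb : (b.val + n - a.val) % n = b.val - a.val := by
    rw [show b.val + n - a.val = b.val - a.val + n by omega, Nat.add_mod_right,
      Nat.mod_eq_of_lt (by omega)]
  rw [cycBtw, hb, Fin.lt_def, Fin.lt_def]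
  rcases Nat.lt_or_ge x.val a.val with hx | hx
  · rw [Nat.mod_eq_of_lt (by omega)]
    omega
  · rw [show x.val + n - a.val = x.val - a.val + n by omega, Nat.add_mod_right,
      Nat.mod_eq_of_lt (by omega)]
    omega

theorem crossing_of_interleave {a b c d : Fin n} (hab : a < b) (hcd : c < d)
    (h : Interleave (a.val, b.val) (c.val, d.val)) : crossing n id s(a, b) s(c, d) := by
  refine ⟨a, b, c, d, rfl, rfl, hab.ne, hcd.ne, ?_⟩
  simp only [id, cycBtw_iff hab, ne_eq, Fin.ext_iff, Fin.lt_def, Interleave] at h ⊢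
  omega

theorem lt_of_isChord {a b : Fin n} (hab : a < b) (h : IsChord n s(a, b)) :
    a.val + 1 < b.val ∧ b.val + 1 < a.val + n := by
  obtain ⟨hne, hne'⟩ := not_or.1 (h a b rfl)
  rw [Nat.mod_eq_of_lt (by omega)] at hne
  refine ⟨by omega, ?_⟩
  by_contra! hle
  have hbn : b.val + 1 = n := by omega
  rw [hbn, Nat.mod_self] at hne'
  omega

open Classical in
theorem isConvexKPlanar_image_endpoints {k : ℕ} {C : Finset (Sym2 (Fin n))}
    (hC : ∀ e ∈ C, ¬ e.IsDiag) (hcross : ∀ e ∈ C, #{f ∈ C | crossing n id e f} ≤ k) :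
    IsConvexKPlanar k (range n) (C.image endpoints) where
  fst_mem := by simp [endpoints]
  snd_mem := by simp [endpoints]
  lt := by
    rw [forall_mem_image]
    intro e he
    obtain ⟨a, b, hab, rfl⟩ := exists_lt_of_not_isDiag (hC e he)
    rwa [endpoints_mk hab]
  card_crossing_le := by
    rw [forall_mem_image]
    intro e he
    rw [filter_image]
    refine (card_image_le.trans (card_le_card fun f hf => ?_)).trans (hcross e he)
    rw [mem_filter] at hf ⊢
    obtain ⟨a, b, hab, rfl⟩ := exists_lt_of_not_isDiag (hC e he)
    obtain ⟨c, d, hcd, rfl⟩ := exists_lt_of_not_isDiag (hC f hf.1)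
    rw [endpoints_mk hab, endpoints_mk hcd] at hf
    exact ⟨hf.1, crossing_of_interleave hab hcd hf.2⟩

end Transfer

theorem chords_per_face_general (n : ℕ) (hn : 3 ≤ n) (G : SimpleGraph (Fin n))
    (hchords : ∀ e ∈ ({e ∈ G.edgeSet | IsChord n e} : Set (Sym2 (Fin n))),
      ({f ∈ G.edgeSet | IsChord n f ∧ crossing n id e f}).ncard ≤ 5) :
    ({e ∈ G.edgeSet | IsChord n e} : Set (Sym2 (Fin n))).ncard ≤ 3 * n - 9 := by
  classical
  let C := {e ∈ G.edgeFinset | IsChord n e}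
  have hC : ∀ e, e ∈ C ↔ e ∈ G.edgeSet ∧ IsChord n e := by simp [C]
  have hdiag : ∀ e ∈ C, ¬ e.IsDiag := fun e he => G.not_isDiag_of_mem_edgeSet ((hC e).1 he).1
  have hcross : ∀ e ∈ C, #{f ∈ C | crossing n id e f} ≤ 5 := by
    intro e he
    rw [← Set.ncard_coe_finset]
    simpa only [coe_filter, hC, and_assoc] using hchords e ((hC e).1 he)
  have hbound := (isConvexKPlanar_image_endpoints hdiag hcross).card_chords_add_nine_le hn <| by
    rw [forall_mem_image]
    intro e he
    obtain ⟨a, b, hab, rfl⟩ := exists_lt_of_not_isDiag (hdiag e he)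
    rw [endpoints_mk hab]
    exact lt_of_isChord hab ((hC _).1 he).2
  rw [card_image_of_injective _ endpoints_injective, ← Set.ncard_coe_finset] at hbound
  simp only [C, coe_filter, SimpleGraph.mem_edgeFinset] at hbound
  omega

/-- Let `G` be a graph on `n ≥ 3` vertices in a cyclic order whose edges comprise
all `n` boundary edges (between consecutive vertices) together with the set `C` of
its chords.  If every chord of `G` is crossed by at most `5` other chords, then
`G` has at most `3n - 9` chords. -/
theorem chords_per_face (n : ℕ) (hn : 3 ≤ n) (G : SimpleGraph (Fin n))
    (hboundary : ∀ i : Fin n, G.Adj i ⟨(i.val + 1) % n, Nat.mod_lt _ (by omega)⟩)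
    (hchords : ∀ e ∈ ({e ∈ G.edgeSet | IsChord n e} : Set (Sym2 (Fin n))),
      ({f ∈ G.edgeSet | IsChord n f ∧ crossing n id e f}).ncard ≤ 5) :
    ({e ∈ G.edgeSet | IsChord n e} : Set (Sym2 (Fin n))).ncard ≤ 3 * n - 9 :=
  chords_per_face_general n hn G hchords
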